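/- arXiv:0704.2500 — 2 statements merged into one kernel-verified Lean document; each statement's English description precedes it below -/
import Mathlib

section
/- In the deterministic L²-selection setting of the context, if ī minimizes M̄_i over i ∈ I_N and i* minimizes ‖f_i − f‖_2 over i ∈ I_N, then ‖f_ī − f‖_2 ≤ ‖f_{i*} − f‖_2 + 4ε·max_{j∈I_N, j≠i*} |z_{i*j}|. -/
open MeasureTheory
open scoped ENNReal

/-- Lebesgue measure restricted to the unit cube `[0,1]^d`. -/
noncomputable def cubeMeasure (d : ℕ) : Measure (Fin d → ℝ) :=
  volume.restrict (Set.Icc 0 1)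

/-- The real-valued `L^r` norm on the unit cube. -/
noncomputable def Lnorm {d : ℕ} (r : ℝ≥0∞) (g : (Fin d → ℝ) → ℝ) : ℝ :=
  (eLpNorm g r (cubeMeasure d)).toReal

/-!
In an inner product space the pairing of `(x - y) / ‖x - y‖` with `(x + y) / 2 - w` is the signed
distance from `w` to the perpendicular bisector of `x` and `y`, and it equals
`(‖x - w‖² - ‖y - w‖²) / (2 ‖x - y‖)`. If `x` is the candidate nearest to `w`, all its offsets are
nonpositive, so its score is at most the noise level `C`, and so is the score of the selected
candidate. Testing the selected candidate against the nearest one costs one more `C`, so the offset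
between the two is at most `2 C`; since `‖x - y‖ ≤ ‖x - w‖ + ‖y - w‖`, their distances to `w` then
differ by at most `4 C`.
-/

section InnerProductSpace

variable {E : Type*} [NormedAddCommGroup E] [InnerProductSpace ℝ E]

/-- The signed distance from `w` to the perpendicular bisector of `x` and `y`, positive on the side
of `y`; it is `0` if `x = y`. For `x = f_i`, `y = f_j` and `w = f` it is the quantity
`⟨ψ_{ij}, u_{ij}⟩ - ⟨ψ_{ij}, f⟩` of the pairwise test. -/
noncomputable def bisectorOffset (w x y : E) : ℝ :=
  inner ℝ (NormedSpace.normalize (x - y)) (midpoint ℝ x y - w)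

theorem inner_sub_midpoint_sub (w x y : E) :
    inner ℝ (x - y) (midpoint ℝ x y - w) = (‖x - w‖ ^ 2 - ‖y - w‖ ^ 2) / 2 := by
  have hdiff : x - y = (x - w) - (y - w) := by abel
  have hmid : midpoint ℝ x y - w = (2⁻¹ : ℝ) • ((x - w) + (y - w)) := by
    rw [midpoint_eq_smul_add, invOf_eq_inv]
    module
  rw [hdiff, hmid, real_inner_smul_right, inner_sub_left, inner_add_right, inner_add_right,
    real_inner_self_eq_norm_sq, real_inner_self_eq_norm_sq, real_inner_comm (x - w) (y - w)]
  ring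

theorem bisectorOffset_eq_div (w x y : E) :
    bisectorOffset w x y = (‖x - w‖ ^ 2 - ‖y - w‖ ^ 2) / (2 * ‖x - y‖) := by
  rw [bisectorOffset, NormedSpace.normalize, real_inner_smul_left, inner_sub_midpoint_sub,
    inv_mul_eq_div, div_div]

theorem bisectorOffset_nonpos {w x y : E} (h : ‖x - w‖ ≤ ‖y - w‖) : bisectorOffset w x y ≤ 0 := by
  rw [bisectorOffset_eq_div]
  exact div_nonpos_of_nonpos_of_nonneg (sub_nonpos.2 (by gcongr)) (by positivity)

theorem norm_sub_le_add_of_bisectorOffset_le {w x y : E} {C : ℝ} (hxy : x ≠ y) (hC : 0 ≤ C)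
    (h : bisectorOffset w x y ≤ C) : ‖x - w‖ ≤ ‖y - w‖ + 2 * C := by
  have hpos : 0 < ‖x - y‖ := norm_sub_pos_iff.2 hxy
  have htri : ‖x - y‖ ≤ ‖x - w‖ + ‖y - w‖ := by
    simpa only [norm_sub_rev w y] using norm_sub_le_norm_sub_add_norm_sub x w y
  rw [bisectorOffset_eq_div, div_le_iff₀ (by positivity)] at h
  have hmul : (‖x - w‖ - ‖y - w‖) * (‖x - w‖ + ‖y - w‖) ≤ 2 * C * (‖x - w‖ + ‖y - w‖) :=
    calc (‖x - w‖ - ‖y - w‖) * (‖x - w‖ + ‖y - w‖)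
        = ‖x - w‖ ^ 2 - ‖y - w‖ ^ 2 := by ring
      _ ≤ C * (2 * ‖x - y‖) := h
      _ = 2 * C * ‖x - y‖ := by ring
      _ ≤ 2 * C * (‖x - w‖ + ‖y - w‖) := by gcongr
  linarith [le_of_mul_le_mul_right hmul (hpos.trans_le htri)]

variable {ι : Type*} {x : ι → E} {w : E} {ζ : ι → ι → ℝ} {C : ℝ}

/-- The score `M̄_i` of the candidate `x i` for the target `w`: the largest of its pairwise tests
against the other candidates, where the test against `x j` is perturbed by the noise `ζ i j`. It is
`0` if there are no other candidates. -/
noncomputable def selectionScore (x : ι → E) (w : E) (ζ : ι → ι → ℝ) (i : ι) : ℝ :=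
  ⨆ j : {j : ι // j ≠ i}, (bisectorOffset w (x i) (x j) - ζ i j)

theorem bisectorOffset_sub_le_selectionScore [Finite ι] {i j : ι} (hji : j ≠ i) :
    bisectorOffset w (x i) (x j) - ζ i j ≤ selectionScore x w ζ i :=
  le_ciSup (f := fun j : {j : ι // j ≠ i} => bisectorOffset w (x i) (x j) - ζ i j)
    (Set.finite_range _).bddAbove ⟨j, hji⟩

theorem selectionScore_le_of_forall_norm_sub_le {i : ι} (hC : 0 ≤ C)
    (hζ : ∀ j, j ≠ i → |ζ i j| ≤ C) (hi : ∀ j, ‖x i - w‖ ≤ ‖x j - w‖) :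
    selectionScore x w ζ i ≤ C := by
  refine Real.iSup_le (fun ⟨j, hji⟩ => ?_) hC
  linarith [bisectorOffset_nonpos (hi j), neg_le_of_abs_le (hζ j hji)]

theorem norm_sub_le_of_selectionScore_le [Finite ι] {i k : ι} (hx : Function.Injective x)
    (hanti : ∀ i j, i ≠ j → ζ j i = -ζ i j) (hC : 0 ≤ C) (hζ : ∀ j, j ≠ k → |ζ k j| ≤ C)
    (hscore : selectionScore x w ζ i ≤ selectionScore x w ζ k)
    (hk : ∀ j, ‖x k - w‖ ≤ ‖x j - w‖) : ‖x i - w‖ ≤ ‖x k - w‖ + 4 * C := by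
  rcases eq_or_ne i k with rfl | hik
  · linarith
  have hnoise : ζ i k ≤ C := by
    rw [hanti k i hik.symm]
    exact (neg_le_abs _).trans (hζ i hik)
  have hoffset : bisectorOffset w (x i) (x k) ≤ 2 * C := by
    linarith [bisectorOffset_sub_le_selectionScore (x := x) (w := w) (ζ := ζ) hik.symm,
      selectionScore_le_of_forall_norm_sub_le hC hζ hk]
  linarith [norm_sub_le_add_of_bisectorOffset_le (hx.ne hik) (by positivity) hoffset]

end InnerProductSpace

section Lp

variable {α : Type*} [MeasurableSpace α] {μ : Measure α}

theorem norm_toLp_sub_toLp {E : Type*} [NormedAddCommGroup E] {p : ℝ≥0∞} {g h : α → E}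
    (hg : MemLp g p μ) (hh : MemLp h p μ) :
    ‖hg.toLp g - hh.toLp h‖ = (eLpNorm (fun t => g t - h t) p μ).toReal := by
  rw [← MemLp.toLp_sub, Lp.norm_toLp]
  rfl

theorem inner_toLp_toLp {𝕜 E : Type*} [RCLike 𝕜] [NormedAddCommGroup E] [InnerProductSpace 𝕜 E]
    {g h : α → E} (hg : MemLp g 2 μ) (hh : MemLp h 2 μ) :
    inner 𝕜 (hg.toLp g) (hh.toLp h) = ∫ t, inner 𝕜 (g t) (h t) ∂μ := by
  rw [L2.inner_def]
  refine integral_congr_ae ?_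
  filter_upwards [hg.coeFn_toLp, hh.coeFn_toLp] with t hgt hht
  rw [hgt, hht]

theorem bisectorOffset_toLp {f g h : α → ℝ} (hf : MemLp f 2 μ) (hg : MemLp g 2 μ)
    (hh : MemLp h 2 μ) :
    bisectorOffset (hf.toLp f) (hg.toLp g) (hh.toLp h) =
      (∫ t, (g t - h t) / (eLpNorm (fun s => g s - h s) 2 μ).toReal * ((g t + h t) / 2) ∂μ) -
        ∫ t, (g t - h t) / (eLpNorm (fun s => g s - h s) 2 μ).toReal * f t ∂μ := by
  have hnormalize : NormedSpace.normalize (hg.toLp g - hh.toLp h) =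
      ((hg.sub hh).const_smul (eLpNorm (fun s => g s - h s) 2 μ).toReal⁻¹).toLp := by
    rw [NormedSpace.normalize, norm_toLp_sub_toLp, ← MemLp.toLp_sub, MemLp.toLp_const_smul]
  have hmidpoint : midpoint ℝ (hg.toLp g) (hh.toLp h) =
      ((hg.add hh).const_smul (2⁻¹ : ℝ)).toLp := by
    rw [midpoint_eq_smul_add, invOf_eq_inv, ← MemLp.toLp_add, MemLp.toLp_const_smul]
  rw [bisectorOffset, inner_sub_right, hnormalize, hmidpoint, inner_toLp_toLp, inner_toLp_toLp]
  simp only [RCLike.inner_apply', conj_trivial, Pi.smul_apply, Pi.sub_apply, Pi.add_apply,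
    smul_eq_mul, div_eq_inv_mul]

theorem stmt_10_general {ι : Type*} [Finite ι] {f : α → ℝ} {F : ι → α → ℝ}
    (hf : MemLp f 2 μ) (hF : ∀ i, MemLp (F i) 2 μ)
    (hFdist : ∀ i j, i ≠ j → 0 < (eLpNorm (fun t => F i t - F j t) 2 μ).toReal)
    {ε : ℝ} (hε : 0 ≤ ε) {ψ u : ι → ι → α → ℝ}
    (hψ : ∀ i j, i ≠ j → ∀ t,
      ψ i j t = (F i t - F j t) / (eLpNorm (fun s => F i s - F j s) 2 μ).toReal)
    (hu : ∀ i j t, u i j t = (F i t + F j t) / 2)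
    {z : ι → ι → ℝ} (hz : ∀ i j, i ≠ j → z j i = -z i j) {Mbar : ι → ℝ}
    (hM : ∀ i, Mbar i = ⨆ j : {j : ι // j ≠ i},
      ((∫ t, ψ i j t * u i j t ∂μ) - ((∫ t, ψ i j t * f t ∂μ) + ε * z i j)))
    {ibar istar : ι} (hmin : Mbar ibar ≤ Mbar istar)
    (histar : ∀ i, (eLpNorm (fun t => F istar t - f t) 2 μ).toReal ≤
      (eLpNorm (fun t => F i t - f t) 2 μ).toReal) :
    (eLpNorm (fun t => F ibar t - f t) 2 μ).toReal ≤
      (eLpNorm (fun t => F istar t - f t) 2 μ).toReal +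
        4 * ε * ⨆ j : {j : ι // j ≠ istar}, |z istar j| := by
  have hinj : Function.Injective fun i => (hF i).toLp (F i) := by
    intro i j (hij : (hF i).toLp (F i) = (hF j).toLp (F j))
    by_contra hne
    have hzero : (eLpNorm (fun t => F i t - F j t) 2 μ).toReal = 0 := by
      rw [← norm_toLp_sub_toLp (hF i) (hF j), hij, sub_self, norm_zero]
    exact (hFdist i j hne).ne' hzero
  have hscore (i : ι) :
      Mbar i =
        selectionScore (fun i => (hF i).toLp (F i)) (hf.toLp f) (fun i j => ε * z i j) i := by
    rw [hM i, selectionScore]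
    refine iSup_congr fun ⟨j, hji⟩ => ?_
    simp only [bisectorOffset_toLp, hψ i j hji.symm, hu, sub_sub]
  have hnoise (j : ι) (hj : j ≠ istar) :
      |ε * z istar j| ≤ ε * ⨆ j : {j : ι // j ≠ istar}, |z istar j| := by
    rw [abs_mul, abs_of_nonneg hε]
    gcongr
    exact le_ciSup (f := fun j : {j : ι // j ≠ istar} => |z istar j|)
      (Set.finite_range _).bddAbove ⟨j, hj⟩
  simp only [hscore] at hmin
  simp only [← norm_toLp_sub_toLp (hF _) hf] at histar ⊢
  rw [mul_assoc]
  exact norm_sub_le_of_selectionScore_le hinj (fun i j hij => by rw [hz i j hij, mul_neg])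
    (mul_nonneg hε (Real.iSup_nonneg fun _ => abs_nonneg _)) hnoise hmin histar

end Lp

/-- deterministic step in the proof of Theorem 4: if `ī` minimizes
`M̄_i` and `i*` minimizes `‖f_i − f‖₂`, then
`‖f_ī − f‖₂ ≤ ‖f_{i*} − f‖₂ + 4ε·max_{j ≠ i*} |z_{i*j}|`. -/
theorem stmt_10
    {d N : ℕ} (hd : 1 ≤ d) (hN : 2 ≤ N)
    (f : (Fin d → ℝ) → ℝ) (F : Fin N → (Fin d → ℝ) → ℝ)
    (hfm : Measurable f) (hFm : ∀ i, Measurable (F i))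
    (hf : eLpNorm f 2 (cubeMeasure d) ≠ ⊤)
    (hF : ∀ i, eLpNorm (F i) 2 (cubeMeasure d) ≠ ⊤)
    (hFdist : ∀ i j, i ≠ j → 0 < Lnorm 2 (fun t => F i t - F j t))
    (ε : ℝ) (hε : 0 < ε)
    (ψ : Fin N → Fin N → (Fin d → ℝ) → ℝ)
    (hψdef : ∀ i j, i ≠ j → ∀ t, ψ i j t =
      (F i t - F j t) / Lnorm 2 (fun u => F i u - F j u))
    (u : Fin N → Fin N → (Fin d → ℝ) → ℝ)
    (hudef : ∀ i j t, u i j t = (F i t + F j t) / 2)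
    (z : Fin N → Fin N → ℝ) (hzanti : ∀ i j, i ≠ j → z j i = - z i j)
    (Mbar : Fin N → ℝ)
    (hM : ∀ i, Mbar i = ⨆ j : {j : Fin N // j ≠ i},
      ((∫ t, ψ i j.1 t * u i j.1 t ∂(cubeMeasure d)) -
        ((∫ t, ψ i j.1 t * f t ∂(cubeMeasure d)) + ε * z i j.1)))
    (ibar : Fin N) (hmin : ∀ i, Mbar ibar ≤ Mbar i)
    (istar : Fin N)
    (histar : ∀ i, Lnorm 2 (fun t => F istar t - f t) ≤ Lnorm 2 (fun t => F i t - f t)) :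
    Lnorm 2 (fun t => F ibar t - f t) ≤
      Lnorm 2 (fun t => F istar t - f t) +
        4 * ε * ⨆ j : {j : Fin N // j ≠ istar}, |z istar j.1| :=
  stmt_10_general ⟨hfm.aestronglyMeasurable, hf.lt_top⟩
    (fun i => ⟨(hFm i).aestronglyMeasurable, (hF i).lt_top⟩) hFdist hε.le hψdef hudef hzanti hM
    (hmin istar) histar
end

section
/- In the normal-means setting of the context with Σ the identity matrix, w a standard Gaussian vector in ℝ^n, probe set Ψ̃ of explicit ℓ_p-duality vectors, δ = ε and κ = √(2 ln(N²/ε)), the selected estimator μ̂ satisfies E|μ̂ − μ|_p ≤ 3·min_{i∈I_N} |μ − μ_i|_p + 2Q(p)·ε·√(2 ln(N²/ε)) + 2Lε, where Q(p) = 1 for p ∈ [2,∞); Q(p) = max_{i∈I_N, i≠i*} (|μ_{i*} − μ_i|_{2p−2}/|μ_{i*} − μ_i|_p)^{p−1} for p ∈ (1,2]; and Q(1) = max_{i∈I_N, i≠i*} √(card{k : μ_i(k) ≠ μ_{i*}(k)}). -/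
open MeasureTheory Matrix
open scoped ENNReal

/-- The `ℓ_r` norm of a vector in `ℝ^n`, for `r ∈ [1,∞]`. -/
noncomputable def lnorm {n : ℕ} (r : ℝ≥0∞) (v : Fin n → ℝ) : ℝ :=
  if r = ⊤ then ⨆ k, |v k| else (∑ k, |v k| ^ r.toReal) ^ (1 / r.toReal)

/-!
Call the noise good if `|ψᵀw| ≤ κ|ψ|₂` for every probe `ψ`. On this event Hölder's inequality bounds
the statistic of the best candidate by its distance to the target, hence also the statistic of the
selected candidate. The probe attached to the two candidates norms their difference, so both
statistics together control the distance between them, up to twice the threshold of that probe; the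
triangle inequality then gives the factor `3`. Since the probe set is symmetric, one-sided
sub-Gaussian tails and a union bound give the bad event probability at most `N² exp(-κ²/2) = ε`, and
there the loss is at most `2 L`.
-/

open ProbabilityTheory
open scoped NNReal

section lnorm

variable {n : ℕ} {p q r s : ℝ≥0∞} {v : Fin n → ℝ}

lemma lnorm_top (v : Fin n → ℝ) : lnorm ⊤ v = ⨆ k, |v k| := if_pos rfl

lemma lnorm_of_ne_top (hr : r ≠ ⊤) (v : Fin n → ℝ) :
    lnorm r v = (∑ k, |v k| ^ r.toReal) ^ (1 / r.toReal) := if_neg hr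

lemma lnorm_one (v : Fin n → ℝ) : lnorm 1 v = ∑ k, |v k| := by
  simp [lnorm_of_ne_top ENNReal.one_ne_top]

lemma lnorm_two (v : Fin n → ℝ) : lnorm 2 v = √(∑ k, v k ^ 2) := by
  simp [lnorm_of_ne_top ENNReal.ofNat_ne_top, Real.sqrt_eq_rpow]

lemma lnorm_nonneg (r : ℝ≥0∞) (v : Fin n → ℝ) : 0 ≤ lnorm r v := by
  unfold lnorm
  split_ifs
  · exact Real.iSup_nonneg fun k => abs_nonneg _
  · positivity

lemma lnorm_neg (r : ℝ≥0∞) (v : Fin n → ℝ) : lnorm r (-v) = lnorm r v := by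
  simp only [lnorm, Pi.neg_apply, abs_neg]

lemma lnorm_sub_comm (r : ℝ≥0∞) (u v : Fin n → ℝ) : lnorm r (u - v) = lnorm r (v - u) := by
  rw [← neg_sub, lnorm_neg]

lemma lnorm_rpow_toReal (hr0 : r ≠ 0) (hr : r ≠ ⊤) (v : Fin n → ℝ) :
    lnorm r v ^ r.toReal = ∑ k, |v k| ^ r.toReal := by
  rw [lnorm_of_ne_top hr, one_div,
    Real.rpow_inv_rpow (by positivity) (ENNReal.toReal_ne_zero.mpr ⟨hr0, hr⟩)]

lemma abs_apply_le_lnorm (hr0 : r ≠ 0) (v : Fin n → ℝ) (k : Fin n) : |v k| ≤ lnorm r v := by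
  by_cases hr : r = ⊤
  · rw [hr, lnorm_top]
    exact le_ciSup (f := fun k => |v k|) (Set.finite_range _).bddAbove k
  · rw [← Real.rpow_le_rpow_iff (abs_nonneg _) (lnorm_nonneg r v) (ENNReal.toReal_pos hr0 hr),
      lnorm_rpow_toReal hr0 hr]
    exact Finset.single_le_sum (f := fun k => |v k| ^ r.toReal) (fun k _ => by positivity)
      (Finset.mem_univ k)

lemma lnorm_pos (hr0 : r ≠ 0) (hv : v ≠ 0) : 0 < lnorm r v := by
  obtain ⟨k, hk⟩ := Function.ne_iff.mp hv
  exact (abs_pos.mpr hk).trans_le (abs_apply_le_lnorm hr0 v k)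

lemma lnorm_le_of_exponent_le (hr0 : r ≠ 0) (hrs : r ≤ s) (v : Fin n → ℝ) :
    lnorm s v ≤ lnorm r v := by
  have hA := lnorm_nonneg r v
  by_cases hs : s = ⊤
  · rw [hs, lnorm_top]
    exact Real.iSup_le (abs_apply_le_lnorm hr0 v) hA
  have hr : r ≠ ⊤ := ne_top_of_le_ne_top hs hrs
  have hs0 : s ≠ 0 := (hr0.bot_lt.trans_le hrs).ne'
  have hsplit {x : ℝ} (hx : 0 ≤ x) :
      x ^ s.toReal = x ^ r.toReal * x ^ (s.toReal - r.toReal) := by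
    rw [← Real.rpow_add_of_nonneg hx ENNReal.toReal_nonneg
      (sub_nonneg.mpr (ENNReal.toReal_mono hs hrs)), add_sub_cancel]
  rw [← Real.rpow_le_rpow_iff (lnorm_nonneg s v) hA (ENNReal.toReal_pos hs0 hs)]
  calc lnorm s v ^ s.toReal = ∑ k, |v k| ^ s.toReal := lnorm_rpow_toReal hs0 hs v
    _ = ∑ k, |v k| ^ r.toReal * |v k| ^ (s.toReal - r.toReal) := by
        simp only [hsplit (abs_nonneg _)]
    _ ≤ ∑ k, |v k| ^ r.toReal * lnorm r v ^ (s.toReal - r.toReal) := by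
        gcongr with k
        · exact sub_nonneg.mpr (ENNReal.toReal_mono hs hrs)
        · exact abs_apply_le_lnorm hr0 v k
    _ = lnorm r v ^ s.toReal := by rw [← Finset.sum_mul, ← lnorm_rpow_toReal hr0 hr, ← hsplit hA]

lemma lnorm_eq_norm_toLp (hr0 : r ≠ 0) (v : Fin n → ℝ) : lnorm r v = ‖WithLp.toLp r v‖ := by
  by_cases hr : r = ⊤
  · subst hr
    rw [lnorm_top, PiLp.norm_eq_ciSup]
    rfl
  · rw [lnorm_of_ne_top hr, PiLp.norm_eq_sum (ENNReal.toReal_pos hr0 hr)]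
    rfl

lemma lnorm_add_le (hp : 1 ≤ p) (u v : Fin n → ℝ) :
    lnorm p (u + v) ≤ lnorm p u + lnorm p v := by
  have : Fact (1 ≤ p) := ⟨hp⟩
  simp only [lnorm_eq_norm_toLp (zero_lt_one.trans_le hp).ne', WithLp.toLp_add]
  exact norm_add_le _ _

lemma lnorm_sub_le (hp : 1 ≤ p) (u v : Fin n → ℝ) :
    lnorm p (u - v) ≤ lnorm p u + lnorm p v := by
  rw [sub_eq_add_neg, ← lnorm_neg p v]
  exact lnorm_add_le hp u (-v)

lemma lnorm_sub_le_add_lnorm_sub (hp : 1 ≤ p) (u v z : Fin n → ℝ) :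
    lnorm p (u - z) ≤ lnorm p (u - v) + lnorm p (v - z) := by
  rw [← sub_add_sub_cancel u v z]
  exact lnorm_add_le hp _ _

lemma abs_dotProduct_le_lnorm_one_mul_lnorm_top (u v : Fin n → ℝ) :
    |u ⬝ᵥ v| ≤ lnorm 1 u * lnorm ⊤ v := by
  calc |u ⬝ᵥ v| ≤ ∑ k, |u k * v k| := Finset.abs_sum_le_sum_abs _ _
    _ ≤ ∑ k, |u k| * lnorm ⊤ v := by
        simp only [abs_mul]
        gcongr with k
        exact abs_apply_le_lnorm ENNReal.top_ne_zero v k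
    _ = lnorm 1 u * lnorm ⊤ v := by rw [← Finset.sum_mul, lnorm_one]

lemma abs_dotProduct_le_lnorm_mul_lnorm [p.HolderConjugate q] (u v : Fin n → ℝ) :
    |u ⬝ᵥ v| ≤ lnorm p u * lnorm q v := by
  by_cases hp : p = ⊤
  · obtain rfl := hp
    obtain rfl := (ENNReal.HolderConjugate.eq_top_iff_eq_one ⊤ q).mp rfl
    rw [dotProduct_comm, mul_comm]
    exact abs_dotProduct_le_lnorm_one_mul_lnorm_top v u
  by_cases hq : q = ⊤
  · obtain rfl := hq
    obtain rfl := (ENNReal.HolderConjugate.eq_top_iff_eq_one ⊤ p).mp rfl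
    exact abs_dotProduct_le_lnorm_one_mul_lnorm_top u v
  have hconj := ENNReal.HolderConjugate.toReal_of_ne_top (p := p) (q := q) hp hq
  have upper (u : Fin n → ℝ) : u ⬝ᵥ v ≤ lnorm p u * lnorm q v := by
    rw [lnorm_of_ne_top hp, lnorm_of_ne_top hq]
    exact Real.inner_le_Lp_mul_Lq Finset.univ u v hconj
  refine abs_le'.mpr ⟨upper u, ?_⟩
  simpa only [neg_dotProduct, lnorm_neg] using upper (-u)

end lnorm

section dualVector

variable {n : ℕ} {p q : ℝ≥0∞} {d : Fin n → ℝ}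

/-- The `ℓ_p`-duality vector of `d`: the norming functional of `d`, viewed as a vector, so that
it has conjugate norm one and pairs with `d` to `lnorm p d`. For `d = 0` it is zero. -/
noncomputable def dualVector (p : ℝ≥0∞) (d : Fin n → ℝ) : Fin n → ℝ := fun k =>
  |d k| ^ (p.toReal - 1) * Real.sign (d k) / lnorm p d ^ (p.toReal - 1)

lemma dualVector_neg (p : ℝ≥0∞) (d : Fin n → ℝ) : dualVector p (-d) = -dualVector p d := by
  ext k
  simp only [dualVector, Pi.neg_apply, abs_neg, lnorm_neg, Real.sign_neg, mul_neg, neg_div]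

lemma dualVector_one_apply (d : Fin n → ℝ) (k : Fin n) :
    dualVector 1 d k = Real.sign (d k) := by
  simp [dualVector]

lemma sign_mul_self_eq_abs (x : ℝ) : Real.sign x * x = |x| := by
  rcases lt_trichotomy x 0 with hx | rfl | hx
  · rw [Real.sign_of_neg hx, abs_of_neg hx, neg_one_mul]
  · simp
  · rw [Real.sign_of_pos hx, abs_of_pos hx, one_mul]

lemma abs_sign_eq_one {x : ℝ} (hx : x ≠ 0) : |Real.sign x| = 1 := by
  rcases Real.sign_apply_eq_of_ne_zero x hx with h | h <;> simp [h]

lemma abs_dualVector_apply (hp : 1 < p.toReal) (d : Fin n → ℝ) (k : Fin n) :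
    |dualVector p d k| = |d k| ^ (p.toReal - 1) / lnorm p d ^ (p.toReal - 1) := by
  have hD := lnorm_nonneg p d
  rw [dualVector, abs_div, abs_mul, abs_of_nonneg (by positivity : 0 ≤ |d k| ^ (p.toReal - 1)),
    abs_of_nonneg (by positivity : 0 ≤ lnorm p d ^ (p.toReal - 1))]
  rcases eq_or_ne (d k) 0 with hk | hk
  · simp [hk, Real.zero_rpow (sub_pos.mpr hp).ne']
  · rw [abs_sign_eq_one hk, mul_one]

lemma dualVector_dotProduct_self (hp0 : p ≠ 0) (hp : p ≠ ⊤) (hd : d ≠ 0) :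
    dualVector p d ⬝ᵥ d = lnorm p d := by
  have hD := lnorm_pos hp0 hd
  have hsplit {x : ℝ} (hx : 0 ≤ x) : x ^ (p.toReal - 1) * x = x ^ p.toReal := by
    have hP : p.toReal - 1 + 1 ≠ 0 := by
      simpa only [sub_add_cancel] using ENNReal.toReal_ne_zero.mpr ⟨hp0, hp⟩
    rw [← Real.rpow_add_one' hx hP, sub_add_cancel]
  calc dualVector p d ⬝ᵥ d = ∑ k, |d k| ^ p.toReal / lnorm p d ^ (p.toReal - 1) := by
        refine Finset.sum_congr rfl fun k _ => ?_
        rw [dualVector, div_mul_eq_mul_div, mul_assoc, sign_mul_self_eq_abs, hsplit (abs_nonneg _)]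
    _ = lnorm p d := by
        rw [← Finset.sum_div, ← lnorm_rpow_toReal hp0 hp, ← hsplit hD.le]
        exact mul_div_cancel_left₀ _ (by positivity)

lemma lnorm_top_dualVector_one (hd : d ≠ 0) : lnorm ⊤ (dualVector 1 d) = 1 := by
  obtain ⟨k, hk⟩ := Function.ne_iff.mp hd
  apply le_antisymm
  · rw [lnorm_top]
    refine Real.iSup_le (fun j => ?_) zero_le_one
    rw [dualVector_one_apply]
    rcases Real.sign_apply_eq (d j) with h | h | h <;> simp [h]
  · calc (1 : ℝ) = |dualVector 1 d k| := by rw [dualVector_one_apply, abs_sign_eq_one hk]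
      _ ≤ lnorm ⊤ (dualVector 1 d) := abs_apply_le_lnorm ENNReal.top_ne_zero _ k

lemma lnorm_dualVector [p.HolderConjugate q] (hp : p ≠ ⊤) (hd : d ≠ 0) :
    lnorm q (dualVector p d) = 1 := by
  by_cases hq : q = ⊤
  · obtain rfl := hq
    obtain rfl := (ENNReal.HolderConjugate.eq_top_iff_eq_one ⊤ p).mp rfl
    exact lnorm_top_dualVector_one hd
  have hp0 := ENNReal.HolderConjugate.ne_zero p q
  have hconj := ENNReal.HolderConjugate.toReal_of_ne_top (p := p) (q := q) hp hq
  have hD := lnorm_pos hp0 hd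
  have hpow (k : Fin n) :
      |dualVector p d k| ^ q.toReal = |d k| ^ p.toReal / lnorm p d ^ p.toReal := by
    rw [abs_dualVector_apply hconj.lt, Real.div_rpow (by positivity) (by positivity),
      ← Real.rpow_mul (abs_nonneg _), ← Real.rpow_mul hD.le, hconj.sub_one_mul_conj]
  rw [lnorm_of_ne_top hq, Finset.sum_congr rfl fun k _ => hpow k, ← Finset.sum_div,
    ← lnorm_rpow_toReal hp0 hp, div_self (by positivity), Real.one_rpow]

lemma lnorm_two_dualVector_le_one (hp2 : 2 ≤ p) (hp : p ≠ ⊤) (hd : d ≠ 0) :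
    lnorm 2 (dualVector p d) ≤ 1 := by
  have := ENNReal.HolderConjugate.conjExponent (one_le_two.trans hp2)
  set q := p.conjExponent
  have hq2 : q ≤ 2 := by
    rw [← ENNReal.inv_le_inv, ← ENNReal.HolderConjugate.one_sub_inv p q,
      ← ENNReal.HolderConjugate.one_sub_inv 2 2]
    gcongr
  calc lnorm 2 (dualVector p d) ≤ lnorm q (dualVector p d) :=
        lnorm_le_of_exponent_le (ENNReal.HolderConjugate.ne_zero q p) hq2 _
    _ = 1 := lnorm_dualVector hp hd

lemma lnorm_two_dualVector (hp1 : 1 < p) (hp : p ≠ ⊤) (d : Fin n → ℝ) :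
    lnorm 2 (dualVector p d) = (lnorm (2 * p - 2) d / lnorm p d) ^ (p.toReal - 1) := by
  have hP : 1 < p.toReal := by
    simpa using (ENNReal.toReal_lt_toReal ENNReal.one_ne_top hp).mpr hp1
  have h2p : 2 * p ≠ ⊤ := ENNReal.mul_ne_top ENNReal.ofNat_ne_top hp
  have htop : 2 * p - 2 ≠ ⊤ := ENNReal.sub_ne_top h2p
  have htoReal : (2 * p - 2).toReal = (p.toReal - 1) * 2 := by
    rw [ENNReal.toReal_sub_of_le (le_mul_of_one_le_right' hp1.le) h2p, ENNReal.toReal_mul,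
      ENNReal.toReal_ofNat]
    ring
  have hD := lnorm_nonneg p d
  have hsq (k : Fin n) : dualVector p d k ^ 2 =
      |d k| ^ (2 * p - 2).toReal / (lnorm p d ^ (p.toReal - 1)) ^ 2 := by
    rw [← sq_abs, abs_dualVector_apply hP, div_pow, htoReal, Real.rpow_mul (abs_nonneg _),
      Real.rpow_two]
  calc lnorm 2 (dualVector p d)
      = √(∑ k, |d k| ^ (2 * p - 2).toReal) / lnorm p d ^ (p.toReal - 1) := by
        rw [lnorm_two, Finset.sum_congr rfl fun k _ => hsq k, ← Finset.sum_div,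
          Real.sqrt_div (by positivity), Real.sqrt_sq (by positivity)]
    _ = lnorm (2 * p - 2) d ^ (p.toReal - 1) / lnorm p d ^ (p.toReal - 1) := by
        rw [lnorm_of_ne_top htop, ← Real.rpow_mul (by positivity), Real.sqrt_eq_rpow, htoReal]
        congr 2
        field_simp [(sub_pos.mpr hP).ne']
    _ = (lnorm (2 * p - 2) d / lnorm p d) ^ (p.toReal - 1) :=
        (Real.div_rpow (lnorm_nonneg _ _) hD _).symm

lemma lnorm_two_dualVector_one (d : Fin n → ℝ) :
    lnorm 2 (dualVector 1 d) = √({k | d k ≠ 0} : Finset (Fin n)).card := by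
  have hsq (k : Fin n) : dualVector 1 d k ^ 2 = if d k ≠ 0 then 1 else 0 := by
    rw [dualVector_one_apply]
    split_ifs with hk
    · rw [← sq_abs, abs_sign_eq_one hk, one_pow]
    · simp [not_not.mp hk]
  simp only [lnorm_two, hsq, Finset.sum_boole]

end dualVector

section probeStatistic

variable {n : ℕ} {ι β : Type*} {p q : ℝ≥0∞}

/-- The selection criterion `M̂_i`, as a function of the residual `z = Y - μ_i`, for probes `φ b`
with thresholds `t b`: the largest normalized excess of `|φ b ⬝ᵥ z|` over its threshold. -/
noncomputable def probeStatistic (q : ℝ≥0∞) (φ : β → Fin n → ℝ) (t : β → ℝ) (z : Fin n → ℝ) : ℝ :=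
  ⨆ b, (|φ b ⬝ᵥ z| - t b) / lnorm q (φ b)

lemma probeStatistic_add_le [p.HolderConjugate q] {φ : β → Fin n → ℝ} {t : β → ℝ}
    {ξ : Fin n → ℝ} (hξ : ∀ b, |φ b ⬝ᵥ ξ| ≤ t b) (v : Fin n → ℝ) :
    probeStatistic q φ t (v + ξ) ≤ lnorm p v := by
  refine Real.iSup_le (fun b => ?_) (lnorm_nonneg p v)
  refine div_le_of_le_mul₀ (lnorm_nonneg _ _) (lnorm_nonneg p v) ?_
  calc |φ b ⬝ᵥ (v + ξ)| - t b ≤ |φ b ⬝ᵥ v| + |φ b ⬝ᵥ ξ| - t b := by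
        rw [dotProduct_add]
        gcongr
        exact abs_add_le _ _
    _ ≤ |φ b ⬝ᵥ v| := by linarith [hξ b]
    _ ≤ lnorm p v * lnorm q (φ b) := by
        rw [dotProduct_comm]
        exact abs_dotProduct_le_lnorm_mul_lnorm v (φ b)

lemma abs_dotProduct_le_probeStatistic_add [Finite β] {φ : β → Fin n → ℝ} {b : β}
    (hb : lnorm q (φ b) = 1) (t : β → ℝ) (z : Fin n → ℝ) :
    |φ b ⬝ᵥ z| ≤ probeStatistic q φ t z + t b := by
  have hle := le_ciSup (f := fun b => (|φ b ⬝ᵥ z| - t b) / lnorm q (φ b))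
    (Set.finite_range _).bddAbove b
  rw [hb, div_one] at hle
  exact sub_le_iff_le_add.mp hle

-- A probe norming `u - v` cannot have small responses to both residuals `y - u` and `y - v`.
lemma lnorm_sub_le_probeStatistic_add [Finite β] {φ : β → Fin n → ℝ} {b : β}
    (hb : lnorm q (φ b) = 1) {u v : Fin n → ℝ} (huv : φ b ⬝ᵥ (u - v) = lnorm p (u - v))
    (t : β → ℝ) (y : Fin n → ℝ) :
    lnorm p (u - v) ≤
      probeStatistic q φ t (y - u) + probeStatistic q φ t (y - v) + 2 * t b := by
  calc lnorm p (u - v) = φ b ⬝ᵥ (y - v) - φ b ⬝ᵥ (y - u) := by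
        rw [← huv, ← dotProduct_sub, sub_sub_sub_cancel_left]
    _ ≤ |φ b ⬝ᵥ (y - v)| + |φ b ⬝ᵥ (y - u)| := (le_abs_self _).trans (abs_sub _ _)
    _ ≤ _ := by
        linarith [abs_dotProduct_le_probeStatistic_add hb t (y - u),
          abs_dotProduct_le_probeStatistic_add hb t (y - v)]

lemma lnorm_sub_le_of_probeStatistic_le [Finite β] [p.HolderConjugate q] {φ : β → Fin n → ℝ}
    {t : β → ℝ} {ξ : Fin n → ℝ} (hξ : ∀ b, |φ b ⬝ᵥ ξ| ≤ t b) {b : β} (hb : lnorm q (φ b) = 1)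
    {u v : Fin n → ℝ} (huv : φ b ⬝ᵥ (u - v) = lnorm p (u - v)) (m : Fin n → ℝ)
    (hle : probeStatistic q φ t (m + ξ - v) ≤ probeStatistic q φ t (m + ξ - u)) :
    lnorm p (v - m) ≤ 3 * lnorm p (m - u) + 2 * t b := by
  have hu : probeStatistic q φ t (m + ξ - u) ≤ lnorm p (m - u) := by
    rw [add_sub_right_comm]
    exact probeStatistic_add_le hξ (m - u)
  calc lnorm p (v - m) ≤ lnorm p (u - v) + lnorm p (m - u) := by
        rw [lnorm_sub_comm p u v, lnorm_sub_comm p m u]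
        exact lnorm_sub_le_add_lnorm_sub (ENNReal.HolderConjugate.one_le p q) v u m
    _ ≤ 3 * lnorm p (m - u) + 2 * t b := by
        linarith [lnorm_sub_le_probeStatistic_add hb huv t (m + ξ)]

/-- The probe set `Ψ̃` of duality vectors of the differences `μ_i - μ_j`, indexed by the ordered
pairs of distinct indices. -/
noncomputable def pairProbe (p : ℝ≥0∞) (Mu : ι → Fin n → ℝ) (b : {b : ι × ι // b.1 ≠ b.2}) :
    Fin n → ℝ :=
  dualVector p (Mu b.1.1 - Mu b.1.2)

lemma exists_pairProbe_eq_neg (p : ℝ≥0∞) (Mu : ι → Fin n → ℝ) (b : {b : ι × ι // b.1 ≠ b.2}) :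
    ∃ b', pairProbe p Mu b' = -pairProbe p Mu b :=
  ⟨⟨b.1.swap, b.2.symm⟩, by rw [pairProbe, pairProbe, ← dualVector_neg, neg_sub]; rfl⟩

lemma lnorm_selected_sub_le [Finite ι] [Nontrivial ι] [p.HolderConjugate q] (hp : p ≠ ⊤)
    {m ξ : Fin n → ℝ} {Mu : ι → Fin n → ℝ} (hMu : Function.Injective Mu) {τ Q : ℝ} (hτ : 0 ≤ τ)
    (hξ : ∀ b, |pairProbe p Mu b ⬝ᵥ ξ| ≤ τ * lnorm 2 (pairProbe p Mu b)) {i j : ι}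
    (hQ : ∀ j, j ≠ i → lnorm 2 (dualVector p (Mu i - Mu j)) ≤ Q)
    (hle : probeStatistic q (pairProbe p Mu) (fun b => τ * lnorm 2 (pairProbe p Mu b))
        (m + ξ - Mu j) ≤
      probeStatistic q (pairProbe p Mu) (fun b => τ * lnorm 2 (pairProbe p Mu b))
        (m + ξ - Mu i)) :
    lnorm p (Mu j - m) ≤ 3 * lnorm p (m - Mu i) + 2 * Q * τ := by
  rcases eq_or_ne j i with rfl | hji
  · obtain ⟨k, hk⟩ := exists_ne j
    have hQ0 : 0 ≤ Q := (lnorm_nonneg 2 _).trans (hQ k hk)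
    rw [lnorm_sub_comm]
    linarith [lnorm_nonneg p (m - Mu j), mul_nonneg hQ0 hτ]
  · have hd : Mu i - Mu j ≠ 0 := sub_ne_zero.mpr (hMu.ne hji.symm)
    let b : {b : ι × ι // b.1 ≠ b.2} := ⟨(i, j), hji.symm⟩
    calc lnorm p (Mu j - m) ≤ 3 * lnorm p (m - Mu i) + 2 * (τ * lnorm 2 (pairProbe p Mu b)) :=
          lnorm_sub_le_of_probeStatistic_le hξ (b := b) (lnorm_dualVector hp hd)
            (dualVector_dotProduct_self (ENNReal.HolderConjugate.ne_zero p q) hp hd) m hle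
      _ ≤ 3 * lnorm p (m - Mu i) + 2 * (τ * Q) := by
          gcongr
          exact hQ j hji
      _ = 3 * lnorm p (m - Mu i) + 2 * Q * τ := by ring

end probeStatistic

section noise

variable {n : ℕ} {β Ω : Type*} [MeasurableSpace Ω] {P : Measure Ω} {w : Ω → Fin n → ℝ}

/-- `w` is a sub-Gaussian random vector with variance proxy the identity matrix: each `v ⬝ᵥ w` is
sub-Gaussian with variance proxy `|v|_2²`. -/
def HasSubgaussianMarginals (w : Ω → Fin n → ℝ) (P : Measure Ω) : Prop :=
  ∀ v : Fin n → ℝ, HasSubgaussianMGF (fun ω => v ⬝ᵥ w ω) (∑ k, ‖v k‖₊ ^ 2) P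

lemma hasSubgaussianMGF_id_gaussianReal (v : ℝ≥0) :
    HasSubgaussianMGF id v (gaussianReal 0 v) where
  integrable_exp_mul t := integrable_exp_mul_gaussianReal t
  mgf_le t := by simp [mgf_id_gaussianReal]

lemma hasSubgaussianMarginals_of_iIndepFun (hindep : iIndepFun (fun k ω => w ω k) P)
    (hw : ∀ k, HasSubgaussianMGF (fun ω => w ω k) 1 P) : HasSubgaussianMarginals w P := by
  intro v
  have hterm (k : Fin n) : HasSubgaussianMGF (fun ω => v k * w ω k) (‖v k‖₊ ^ 2) P := by
    convert! (hw k).const_mul (v k) using 1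
    exact NNReal.eq ((sq_abs _).trans (mul_one _).symm)
  exact HasSubgaussianMGF.sum_of_iIndepFun
    (hindep.comp (fun k x => v k * x) fun k => measurable_const_mul (v k)) fun k _ => hterm k

lemma hasSubgaussianMarginals_of_map_eq_pi_gaussianReal (hw : Measurable w)
    (hlaw : P.map w = Measure.pi fun _ => gaussianReal 0 1) : HasSubgaussianMarginals w P := by
  have hmap (k : Fin n) : P.map (fun ω => w ω k) = gaussianReal 0 1 := by
    rw [← (measurePreserving_eval (fun _ : Fin n => gaussianReal 0 1) k).map_eq, ← hlaw,
      Measure.map_map (measurable_pi_apply k) hw]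
    rfl
  have hP : IsProbabilityMeasure P := by
    have : IsProbabilityMeasure (P.map w) := hlaw ▸ inferInstance
    exact Measure.isProbabilityMeasure_of_map w
  refine hasSubgaussianMarginals_of_iIndepFun ?_ fun k => ?_
  · rw [iIndepFun_iff_map_fun_eq_pi_map fun k => (hw.eval (a := k)).aemeasurable]
    simpa only [hmap] using hlaw
  · rw [← HasSubgaussianMGF.id_map_iff (hw.eval (a := k)).aemeasurable, hmap]
    exact hasSubgaussianMGF_id_gaussianReal 1

lemma HasSubgaussianMarginals.measureReal_dotProduct_gt_le [IsFiniteMeasure P]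
    (hw : HasSubgaussianMarginals w P) (v : Fin n → ℝ) {κ : ℝ} (hκ : 0 ≤ κ) :
    P.real {ω | κ * lnorm 2 v < v ⬝ᵥ w ω} ≤ Real.exp (-κ ^ 2 / 2) := by
  rcases eq_or_ne v 0 with rfl | hv
  · have hempty : {ω | κ * lnorm 2 (0 : Fin n → ℝ) < 0 ⬝ᵥ w ω} = ∅ := by simp [lnorm_two]
    rw [hempty, measureReal_empty]
    positivity
  have hpos := lnorm_pos two_ne_zero hv
  have hproxy : ((∑ k, ‖v k‖₊ ^ 2 : ℝ≥0) : ℝ) = lnorm 2 v ^ 2 := by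
    simp [lnorm_two, Real.sq_sqrt (Finset.sum_nonneg fun k _ => sq_nonneg (v k))]
  calc P.real {ω | κ * lnorm 2 v < v ⬝ᵥ w ω} ≤ P.real {ω | κ * lnorm 2 v ≤ v ⬝ᵥ w ω} :=
        measureReal_mono (Set.ofPred_subset_ofPred.mpr fun _ => le_of_lt)
    _ ≤ Real.exp (-(κ * lnorm 2 v) ^ 2 / (2 * lnorm 2 v ^ 2)) := by
        rw [← hproxy]
        exact (hw v).measure_ge_le (by positivity)
    _ = Real.exp (-κ ^ 2 / 2) := by
        congr 1
        field_simp

-- Symmetry makes the one-sided tails cover the two-sided event, so no factor `2` is lost.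
lemma HasSubgaussianMarginals.measureReal_exists_abs_dotProduct_gt_le [IsFiniteMeasure P]
    [Fintype β] (hw : HasSubgaussianMarginals w P) {φ : β → Fin n → ℝ}
    (hφ : ∀ b, ∃ b', φ b' = -φ b) {κ : ℝ} (hκ : 0 ≤ κ) :
    P.real {ω | ∃ b, κ * lnorm 2 (φ b) < |φ b ⬝ᵥ w ω|} ≤
      Fintype.card β * Real.exp (-κ ^ 2 / 2) := by
  have hsub : {ω | ∃ b, κ * lnorm 2 (φ b) < |φ b ⬝ᵥ w ω|} ⊆
      ⋃ b, {ω | κ * lnorm 2 (φ b) < φ b ⬝ᵥ w ω} := by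
    rintro ω ⟨b, hb⟩
    rcases lt_abs.mp hb with hpos | hneg
    · exact Set.mem_iUnion.mpr ⟨b, hpos⟩
    · obtain ⟨b', hb'⟩ := hφ b
      refine Set.mem_iUnion.mpr ⟨b', ?_⟩
      rwa [Set.mem_ofPred_eq, hb', lnorm_neg, neg_dotProduct]
  calc P.real {ω | ∃ b, κ * lnorm 2 (φ b) < |φ b ⬝ᵥ w ω|}
      ≤ ∑ b, P.real {ω | κ * lnorm 2 (φ b) < φ b ⬝ᵥ w ω} :=
        (measureReal_mono hsub).trans (measureReal_iUnion_fintype_le _)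
    _ ≤ ∑ _b : β, Real.exp (-κ ^ 2 / 2) := by
        gcongr with b
        exact hw.measureReal_dotProduct_gt_le (φ b) hκ
    _ = Fintype.card β * Real.exp (-κ ^ 2 / 2) := by
        rw [Finset.sum_const, nsmul_eq_mul, Finset.card_univ]

lemma integral_le_add_mul_measureReal_gt [IsProbabilityMeasure P] {f : Ω → ℝ}
    (hf : Integrable f P) {c M : ℝ} (hc : 0 ≤ c) (hM : ∀ ω, f ω ≤ M) :
    ∫ ω, f ω ∂P ≤ c + M * P.real {ω | c < f ω} := by
  have hmeas : NullMeasurableSet {ω | c < f ω} P :=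
    nullMeasurableSet_lt aemeasurable_const hf.aemeasurable
  have hind : Integrable ({ω | c < f ω}.indicator fun _ => M) P :=
    (integrable_const M).indicator₀ hmeas
  calc ∫ ω, f ω ∂P ≤ ∫ ω, (c + {ω | c < f ω}.indicator (fun _ => M) ω) ∂P := by
        refine integral_mono hf ((integrable_const c).add hind) fun ω => ?_
        rcases lt_or_ge c (f ω) with hω | hω
        · rw [Set.indicator_of_mem (show ω ∈ {ω | c < f ω} from hω)]
          linarith [hM ω]
        · rwa [Set.indicator_of_notMem (show ω ∉ {ω | c < f ω} from hω.not_gt), add_zero]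
    _ = c + M * P.real {ω | c < f ω} := by
        rw [integral_add (integrable_const c) hind, integral_indicator₀ hmeas,
          setIntegral_const, integral_const, probReal_univ, one_smul, smul_eq_mul, mul_comm M]

lemma exp_neg_sq_sqrt_two_mul_log_div_two_le {x : ℝ} (hx : 0 < x) :
    Real.exp (-√(2 * Real.log x) ^ 2 / 2) ≤ x⁻¹ := by
  rw [← Real.exp_log (inv_pos.mpr hx), Real.exp_le_exp, Real.log_inv, Real.sq_sqrt']
  linarith [le_max_left (2 * Real.log x) 0]

end noise

lemma card_ordered_pair_le_sq (ι : Type*) [Fintype ι] [DecidableEq ι] :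
    Fintype.card {b : ι × ι // b.1 ≠ b.2} ≤ Fintype.card ι ^ 2 := by
  rw [sq, ← Fintype.card_prod]
  exact Fintype.card_subtype_le _

lemma lnorm_sub_le_two_mul_max {n : ℕ} {ι : Type*} [Finite ι] {p : ℝ≥0∞} (hp : 1 ≤ p)
    (m : Fin n → ℝ) (Mu : ι → Fin n → ℝ) (i : ι) :
    lnorm p (Mu i - m) ≤ 2 * max (lnorm p m) (⨆ i, lnorm p (Mu i)) := by
  have hle := le_ciSup (f := fun i => lnorm p (Mu i)) (Set.finite_range _).bddAbove i
  rw [two_mul]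
  exact (lnorm_sub_le hp _ _).trans (add_le_add (hle.trans (le_max_right _ _)) (le_max_left _ _))

lemma lnorm_two_dualVector_sub_le {n : ℕ} {ι : Type*} [Finite ι] {p : ℝ≥0∞} (hp1 : 1 ≤ p)
    (hp : p ≠ ⊤) {Mu : ι → Fin n → ℝ} (hMu : Function.Injective Mu) {i : ι} {Q : ℝ}
    (hQhigh : 2 ≤ p → Q = 1)
    (hQmid : 1 < p → p ≤ 2 → Q = ⨆ j : {j // j ≠ i},
      (lnorm (2 * p - 2) (Mu i - Mu j) / lnorm p (Mu i - Mu j)) ^ (p.toReal - 1))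
    (hQone : p = 1 → Q =
      ⨆ j : {j // j ≠ i}, √(({k | Mu j k ≠ Mu i k} : Finset (Fin n)).card))
    {j : ι} (hj : j ≠ i) : lnorm 2 (dualVector p (Mu i - Mu j)) ≤ Q := by
  rcases le_total 2 p with hp2 | hp2
  · rw [hQhigh hp2]
    exact lnorm_two_dualVector_le_one hp2 hp (sub_ne_zero.mpr (hMu.ne hj.symm))
  rcases hp1.eq_or_lt with rfl | hp1
  · rw [hQone rfl, lnorm_two_dualVector_one]
    simp only [Pi.sub_apply, sub_ne_zero, ne_comm (a := Mu i _)]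
    exact le_ciSup (f := fun j : {j // j ≠ i} => √(({k | Mu j k ≠ Mu i k} : Finset (Fin n)).card))
      (Set.finite_range _).bddAbove ⟨j, hj⟩
  · rw [hQmid hp1 hp2, lnorm_two_dualVector hp1 hp]
    exact le_ciSup (f := fun j : {j // j ≠ i} =>
      (lnorm (2 * p - 2) (Mu i - Mu j) / lnorm p (Mu i - Mu j)) ^ (p.toReal - 1))
      (Set.finite_range _).bddAbove ⟨j, hj⟩

section oracle

variable {n : ℕ} {ι : Type*} [Fintype ι] [Nontrivial ι] {p q : ℝ≥0∞} [p.HolderConjugate q]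
  {m : Fin n → ℝ} {Mu : ι → Fin n → ℝ} {Ω : Type*} [MeasurableSpace Ω] {P : Measure Ω}
  {w : Ω → Fin n → ℝ} {ihat : Ω → ι} {i₀ : ι} {Q σ κ : ℝ}

lemma HasSubgaussianMarginals.measureReal_lnorm_selected_sub_gt_le [IsFiniteMeasure P]
    (hw : HasSubgaussianMarginals w P) (hp : p ≠ ⊤) (hMu : Function.Injective Mu)
    (hσ : 0 ≤ σ) (hκ : 0 ≤ κ)
    (hmin : ∀ ω,
      probeStatistic q (pairProbe p Mu) (fun b => κ * σ * lnorm 2 (pairProbe p Mu b))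
        (m + σ • w ω - Mu (ihat ω)) ≤
      probeStatistic q (pairProbe p Mu) (fun b => κ * σ * lnorm 2 (pairProbe p Mu b))
        (m + σ • w ω - Mu i₀))
    (hQ : ∀ j, j ≠ i₀ → lnorm 2 (dualVector p (Mu i₀ - Mu j)) ≤ Q) :
    P.real {ω | 3 * lnorm p (m - Mu i₀) + 2 * Q * (κ * σ) < lnorm p (Mu (ihat ω) - m)} ≤
      Fintype.card ι ^ 2 * Real.exp (-κ ^ 2 / 2) := by
  classical
  have hgood (ω : Ω)
      (hω : ∀ b, |pairProbe p Mu b ⬝ᵥ w ω| ≤ κ * lnorm 2 (pairProbe p Mu b)) :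
      lnorm p (Mu (ihat ω) - m) ≤ 3 * lnorm p (m - Mu i₀) + 2 * Q * (κ * σ) := by
    refine lnorm_selected_sub_le hp hMu (mul_nonneg hκ hσ) (fun b => ?_) hQ (hmin ω)
    rw [dotProduct_smul, smul_eq_mul, abs_mul, abs_of_nonneg hσ, mul_comm κ, mul_assoc]
    exact mul_le_mul_of_nonneg_left (hω b) hσ
  calc P.real {ω | 3 * lnorm p (m - Mu i₀) + 2 * Q * (κ * σ) < lnorm p (Mu (ihat ω) - m)}
      ≤ P.real {ω | ∃ b, κ * lnorm 2 (pairProbe p Mu b) < |pairProbe p Mu b ⬝ᵥ w ω|} := by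
        refine measureReal_mono (Set.ofPred_subset_ofPred.mpr fun ω => ?_)
        contrapose!
        exact hgood ω
    _ ≤ Fintype.card {b : ι × ι // b.1 ≠ b.2} * Real.exp (-κ ^ 2 / 2) :=
        hw.measureReal_exists_abs_dotProduct_gt_le (exists_pairProbe_eq_neg p Mu) hκ
    _ ≤ Fintype.card ι ^ 2 * Real.exp (-κ ^ 2 / 2) := by
        gcongr
        exact_mod_cast card_ordered_pair_le_sq ι

theorem stmt_15_general [MeasurableSpace ι] [MeasurableSingletonClass ι] [IsProbabilityMeasure P]
    (hw : HasSubgaussianMarginals w P) (hp : p ≠ ⊤) (hMu : Function.Injective Mu)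
    (hσ : 0 ≤ σ) {δ : ℝ} (hδ : 0 < δ) (hκ : κ = √(2 * Real.log (Fintype.card ι ^ 2 / δ)))
    (hihat : Measurable ihat)
    (hmin : ∀ ω,
      probeStatistic q (pairProbe p Mu) (fun b => κ * σ * lnorm 2 (pairProbe p Mu b))
        (m + σ • w ω - Mu (ihat ω)) ≤
      probeStatistic q (pairProbe p Mu) (fun b => κ * σ * lnorm 2 (pairProbe p Mu b))
        (m + σ • w ω - Mu i₀))
    (hQ : ∀ j, j ≠ i₀ → lnorm 2 (dualVector p (Mu i₀ - Mu j)) ≤ Q) :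
    ∫ ω, lnorm p (Mu (ihat ω) - m) ∂P ≤
      3 * lnorm p (m - Mu i₀) + 2 * Q * (κ * σ)
        + 2 * max (lnorm p m) (⨆ i, lnorm p (Mu i)) * δ := by
  have hκ0 : 0 ≤ κ := hκ ▸ Real.sqrt_nonneg _
  have hQ0 : 0 ≤ Q := by
    obtain ⟨j, hj⟩ := exists_ne i₀
    exact (lnorm_nonneg 2 _).trans (hQ j hj)
  have horacle := lnorm_nonneg p (m - Mu i₀)
  have hL := (lnorm_nonneg p m).trans (le_max_left _ (⨆ i, lnorm p (Mu i)))
  have hcard : (0 : ℝ) < Fintype.card ι ^ 2 := pow_pos (mod_cast Fintype.card_pos) 2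
  have htail : Fintype.card ι ^ 2 * Real.exp (-κ ^ 2 / 2) ≤ δ := by
    rw [hκ, ← le_div_iff₀' hcard, ← inv_div _ δ]
    exact exp_neg_sq_sqrt_two_mul_log_div_two_le (div_pos hcard hδ)
  calc ∫ ω, lnorm p (Mu (ihat ω) - m) ∂P
      ≤ 3 * lnorm p (m - Mu i₀) + 2 * Q * (κ * σ) +
          2 * max (lnorm p m) (⨆ i, lnorm p (Mu i)) *
            P.real {ω | 3 * lnorm p (m - Mu i₀) + 2 * Q * (κ * σ) < lnorm p (Mu (ihat ω) - m)} :=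
        integral_le_add_mul_measureReal_gt
          ((Integrable.of_finite (f := fun i => lnorm p (Mu i - m))).comp_measurable hihat)
          (by positivity)
          fun ω => lnorm_sub_le_two_mul_max (ENNReal.HolderConjugate.one_le p q) m Mu (ihat ω)
    _ ≤ _ := by
        gcongr
        exact (hw.measureReal_lnorm_selected_sub_gt_le hp hMu hσ hκ0 hmin hQ).trans htail

end oracle

/-- Corollary 5 of the paper: oracle inequality for the normal-means
aggregation procedure with identity noise covariance, standard Gaussian noise, the
explicit `(0,p)`-good probe set `Ψ̃`, `δ = ε` and `κ = √(2 ln(N²/ε))`. -/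
theorem stmt_15
    {n N : ℕ} (hn : 1 ≤ n) (hN : 2 ≤ N)
    (p q : ℝ≥0∞) (hp : 1 ≤ p) (hp' : p ≠ ⊤) (hpq : 1 / p + 1 / q = 1)
    (mu : Fin n → ℝ) (Mu : Fin N → Fin n → ℝ)
    (hdist : ∀ i j, i ≠ j → Mu i ≠ Mu j)
    (L : ℝ) (hL : L = max (lnorm p mu) (⨆ i, lnorm p (Mu i)))
    (ε : ℝ) (hε0 : 0 < ε) (hε1 : ε < 1)
    -- the probe vectors `ψ̃_{ij}(k) = |μ_i(k) - μ_j(k)|^{p-1} sign(μ_i(k) - μ_j(k)) / |μ_i - μ_j|_p^{p-1}`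
    (ψ : Fin N → Fin N → Fin n → ℝ)
    (hψdef : ∀ i j, i ≠ j → ∀ k, ψ i j k =
      |Mu i k - Mu j k| ^ (p.toReal - 1) * Real.sign (Mu i k - Mu j k) /
        lnorm p (Mu i - Mu j) ^ (p.toReal - 1))
    -- standard Gaussian noise `w` in `ℝ^n`
    {Ω : Type} [MeasurableSpace Ω] (P : Measure Ω) [IsProbabilityMeasure P]
    (w : Ω → Fin n → ℝ) (hw : Measurable w)
    (hwlaw : Measure.map w P = Measure.pi fun _ : Fin n => ProbabilityTheory.gaussianReal 0 1)
    -- the selection procedure with `κ = √(2 ln(N²/ε))`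
    (κ : ℝ) (hκ : κ = Real.sqrt (2 * Real.log ((N : ℝ) ^ 2 / ε)))
    (Mhat : Fin N → Ω → ℝ)
    (hM : ∀ i ω, Mhat i ω = ⨆ jl : {jl : Fin N × Fin N // jl.1 ≠ jl.2},
      (|ψ jl.1.1 jl.1.2 ⬝ᵥ (mu + ε • w ω - Mu i)| - κ * ε * lnorm 2 (ψ jl.1.1 jl.1.2)) /
        lnorm q (ψ jl.1.1 jl.1.2))
    (ihat : Ω → Fin N) (hihatm : Measurable ihat)
    (hmin : ∀ ω i, Mhat (ihat ω) ω ≤ Mhat i ω)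
    (istar : Fin N)
    (histar : ∀ i, lnorm p (mu - Mu istar) ≤ lnorm p (mu - Mu i))
    -- the constant `Q(p)`
    (Q : ℝ)
    (hQhigh : 2 ≤ p → Q = 1)
    (hQmid : 1 < p → p ≤ 2 → Q =
      ⨆ j : {j : Fin N // j ≠ istar},
        (lnorm (2 * p - 2) (Mu istar - Mu j.1) / lnorm p (Mu istar - Mu j.1)) ^
          (p.toReal - 1))
    (hQone : p = 1 → Q =
      ⨆ j : {j : Fin N // j ≠ istar},
        Real.sqrt ((Finset.univ.filter fun k => Mu j.1 k ≠ Mu istar k).card)) :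
    ∫ ω, lnorm p (Mu (ihat ω) - mu) ∂P ≤
      3 * (⨅ i, lnorm p (mu - Mu i))
        + 2 * Q * ε * Real.sqrt (2 * Real.log ((N : ℝ) ^ 2 / ε))
        + 2 * L * ε := by
  have : p.HolderConjugate q := ENNReal.holderConjugate_iff.mpr (by simpa only [one_div] using hpq)
  have : Nontrivial (Fin N) := Fin.nontrivial_iff_two_le.mpr hN
  have hMu : Function.Injective Mu := fun i j hij => by_contra fun hne => hdist i j hne hij
  have hprobe : (fun b : {b : Fin N × Fin N // b.1 ≠ b.2} => ψ b.1.1 b.1.2) = pairProbe p Mu :=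
    funext fun b => funext fun k => hψdef _ _ b.2 k
  have hMhat (i : Fin N) (ω : Ω) : Mhat i ω = probeStatistic q (pairProbe p Mu)
      (fun b => κ * ε * lnorm 2 (pairProbe p Mu b)) (mu + ε • w ω - Mu i) := by
    rw [hM, ← hprobe]
    rfl
  have horacle : lnorm p (mu - Mu istar) = ⨅ i, lnorm p (mu - Mu i) :=
    le_antisymm (le_ciInf histar) (ciInf_le (Set.finite_range _).bddBelow istar)
  have hgauss := hasSubgaussianMarginals_of_map_eq_pi_gaussianReal hw hwlaw
  rw [← hκ, ← horacle, hL, mul_assoc (2 * Q), mul_comm ε κ]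
  exact stmt_15_general hgauss hp' hMu hε0.le hε0 (by rwa [Fintype.card_fin]) hihatm
    (fun ω => by simpa only [hMhat] using hmin ω istar)
    fun _ => lnorm_two_dualVector_sub_le hp hp' hMu hQhigh hQmid hQone
end
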